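/- Let a be an object and J, J' ⊆ I. Then in the lattice (Hom(−,a), ≤_R), w_J ∧ w_{J'} = w_{J∩J'} and w_J ∨ w_{J'} = w_{J∪J'}. Consequently J ↦ w_J is a lattice embedding of the Boolean lattice 2^I into Hom(−,a), and for any w, the join of the simple reflections σ_i over i ∈ I_L(w) equals w_{I_L(w)}. -/

import Mathlib

/-!
The argument rests on the exchange property: if the inverse of a morphism `w` with target `a`
sends the simple root `α_i` to a negative root, then `w = σ_i w'` with `ℓ(w') < ℓ(w)`. It follows
that `σ_i ≤_R w` holds exactly when `w⁻¹ α_i < 0` (`sgen_weakLe_iff`).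

Morphisms with a fixed target `a` are handled through words read as walks that start at `a`; the
map accumulated along the walk is the inverse of the morphism, and `WEq` identifies words of the
same morphism. To prove `exchange` for a word `t ⋯` with `t ≠ i`, one splits off a prefix `p` in
the letters `t, i` such that the rest `q` keeps `α_t` and `α_i` positive. As `q` is then
nonnegative on the span of these two roots, `p` has to make `α_i` negative, and only the rank two
case remains (`exchange_rank_two`).

In rank two let `M` be the number of positive roots at `a` in the span of `α_t, α_i`. A step of a
walk makes at most one more positive root negative, hence an alternating word with fewer than `M`
letters can always be prolonged so that one more root becomes negative. So the alternating word
`t i t ⋯` keeps `α_i` positive as long as it has fewer than `M` letters, and with `M` letters it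
makes all positive roots of the plane negative. The quotient of the two alternating words of
length `M` is a loop by (R4). On the plane it acts by a nonnegative integer matrix of determinant
one with nonnegative inverse, so as the identity there; positivity of the images of the other
simple roots then forces it to be the identity on `ℤ^I`. This gives the braid relation `wEq_alt`.

For parabolic subgroupoids, `w ∈ W_K` and `i ∉ K` imply that `w⁻¹ α_i` has `i`-th coordinate `1`
and so is positive. Hence reduced words of elements of `W_K` only use letters of `K`; `W_K` is
closed downwards in the weak order, `W_J ∩ W_{J'} = W_{J ∩ J'}`, and `K` can be recovered from
`w_K`, which gives the meet and the injectivity. For the join, let `σ_i ≤_R t` for all `i ∈ K`, and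
write `t = u v` with lengths adding up, `u ∈ W_K` and `v` without left descents in `K`. Then
`u⁻¹ α_i < 0` for all `i ∈ K`, so `u` cannot be prolonged inside `W_K`; therefore `u = w_K` and
`w_K ≤_R t` (`longest_weakLe`).
-/

set_option linter.unusedSectionVars false

/-- A Cartan scheme `C = C(I, A, (ρ_i), (C^a))`. -/
structure CartanScheme (I A : Type) [Fintype I] [DecidableEq I] [Fintype A] [Nonempty A] where
  ρ : I → A → A
  c : A → I → I → ℤ
  ρ_invol : ∀ i a, ρ i (ρ i a) = a
  c_diag : ∀ a i, c a i i = 2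
  c_offdiag_nonpos : ∀ a i j, i ≠ j → c a i j ≤ 0
  c_zero_symm : ∀ a i j, c a i j = 0 → c a j i = 0
  c_rho : ∀ a i j, c (ρ i a) i j = c a i j

namespace CartanScheme

variable {I A : Type} [Fintype I] [DecidableEq I] [Fintype A] [Nonempty A] [DecidableEq A]
variable (C : CartanScheme I A)

/-- The simple reflection `σ_i^a` as a map `ℤ^I → ℤ^I`, `σ_i^a(α_j) = α_j - c^a_{ij} α_i`. -/
def sigma (a : A) (i : I) : (I → ℤ) → (I → ℤ) :=
  fun v k => v k - (if k = i then ∑ j, C.c a i j * v j else 0)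

/-- Target object of the word `[i_1, …, i_k]` read at source object `a`:
`ρ_{i_1} ⋯ ρ_{i_k}(a)`. -/
def wordTarget (a : A) : List I → A
  | [] => a
  | i :: l => C.ρ i (wordTarget a l)

/-- The map `σ_{i_1} ⋯ σ_{i_k}^a : ℤ^I → ℤ^I` determined by a word with source `a`. -/
def wordMap (a : A) : List I → ((I → ℤ) → (I → ℤ))
  | [] => id
  | i :: l => C.sigma (C.wordTarget a l) i ∘ wordMap a l

theorem wordTarget_append (a : A) (l₁ l₂ : List I) :
    C.wordTarget a (l₁ ++ l₂) = C.wordTarget (C.wordTarget a l₂) l₁ := by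
  induction l₁ with
  | nil => rfl
  | cons i l ih => simp [wordTarget, ih]

theorem wordMap_append (a : A) (l₁ l₂ : List I) :
    C.wordMap a (l₁ ++ l₂) = C.wordMap (C.wordTarget a l₂) l₁ ∘ C.wordMap a l₂ := by
  induction l₁ with
  | nil => rfl
  | cons i l ih => simp [wordMap, ih, wordTarget_append, Function.comp_assoc]

/-- A morphism of the Weyl groupoid `W(C)`: a source object, a target object, and a map
`ℤ^I → ℤ^I` which is a composition of simple reflections along some word. -/
@[ext]
structure Mor where
  src : A
  tgt : A
  toFun : (I → ℤ) → (I → ℤ)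
  spec : ∃ l : List I, C.wordTarget src l = tgt ∧ C.wordMap src l = toFun

variable {C}

/-- A word realizes a morphism. -/
def Realizes (w : Mor C) (l : List I) : Prop :=
  C.wordTarget w.src l = w.tgt ∧ C.wordMap w.src l = w.toFun

variable (C)

/-- The identity morphism `id^a`. -/
def idMor (a : A) : Mor C := ⟨a, a, id, ⟨[], rfl, rfl⟩⟩

/-- The generator `σ_i^a ∈ Hom(a, ρ_i(a))`. -/
def genMor (i : I) (a : A) : Mor C :=
  ⟨a, C.ρ i a, C.sigma a i, ⟨[i], rfl, Function.comp_id _⟩⟩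

/-- The simple reflection with target `a`, i.e. `id^a σ_i = σ_i^{ρ_i(a)} ∈ Hom(ρ_i(a), a)`. -/
def sgen (a : A) (i : I) : Mor C :=
  { src := C.ρ i a, tgt := a, toFun := C.sigma (C.ρ i a) i,
    spec := ⟨[i], by simp [wordTarget, C.ρ_invol], Function.comp_id _⟩ }

variable {C}

/-- Composition `u ∘ v` (with `v` applied first); junk value `u` if not composable. -/
def Mor.comp (u v : Mor C) : Mor C :=
  if h : v.tgt = u.src then
    { src := v.src, tgt := u.tgt, toFun := u.toFun ∘ v.toFun,
      spec := by
        obtain ⟨lu, hu1, hu2⟩ := u.spec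
        obtain ⟨lv, hv1, hv2⟩ := v.spec
        refine ⟨lu ++ lv, ?_, ?_⟩
        · rw [C.wordTarget_append, hv1, h, hu1]
        · rw [C.wordMap_append, hv1, h, hu2, hv2] }
  else u

/-- Length of a morphism: minimal length of a realizing word. -/
noncomputable def len (w : Mor C) : ℕ := sInf {k | ∃ l : List I, Realizes w l ∧ l.length = k}

/-- A reduced decomposition. -/
def IsReduced (w : Mor C) (l : List I) : Prop := Realizes w l ∧ l.length = len w

/-- The (right) weak order: `u ≤_R uv` iff `ℓ(uv) = ℓ(u) + ℓ(v)`. -/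
def weakLe (u w : Mor C) : Prop :=
  ∃ v : Mor C, v.tgt = u.src ∧ w = u.comp v ∧ len w = len u + len v

/-- Membership in the parabolic subgroupoid `W_J(C)`. -/
def InParabolic (J : Set I) (w : Mor C) : Prop :=
  ∃ l : List I, (∀ i ∈ l, i ∈ J) ∧ Realizes w l

/-- Length with respect to the generators `σ_j`, `j ∈ J`. -/
noncomputable def lenPar (J : Set I) (w : Mor C) : ℕ :=
  sInf {k | ∃ l : List I, (∀ i ∈ l, i ∈ J) ∧ Realizes w l ∧ l.length = k}

/-- The set of letters occurring in some reduced decomposition of `w`;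
by the theorem on reduced decompositions this is the set `J(w)`. -/
def Jset (w : Mor C) : Set I := {i | ∃ l : List I, IsReduced w l ∧ i ∈ l}

variable (C)

/-- The set of real roots at the object `a`. -/
def roots (a : A) : Set (I → ℤ) :=
  {α | ∃ (b : A) (l : List I) (j : I),
    C.wordTarget b l = a ∧ α = C.wordMap b l (Pi.single j 1)}

/-- The set of positive (real) roots at `a`. -/
def posRoots (a : A) : Set (I → ℤ) := {α ∈ C.roots a | ∀ i, 0 ≤ α i}

/-- `R^re(C)` is a finite root system of type `C`: axioms (R1), (R2), (R4) and finiteness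
((R3) holds automatically for real roots). -/
def IsFRS : Prop :=
  (∀ a : A, (C.roots a).Finite) ∧
  (∀ (a : A) (α : I → ℤ), α ∈ C.roots a → (∀ i, 0 ≤ α i) ∨ (∀ i, α i ≤ 0)) ∧
  (∀ (a : A) (i : I) (α : I → ℤ), α ∈ C.roots a → (∃ z : ℤ, α = z • Pi.single i 1) →
    α = Pi.single i 1 ∨ α = -Pi.single i 1) ∧
  (∀ (a : A) (i j : I), i ≠ j →
    (fun x => C.ρ i (C.ρ j x))^[(C.roots a ∩
      {α | ∃ m n : ℕ, α = (m : ℤ) • Pi.single i 1 + (n : ℤ) • Pi.single j 1}).ncard] a = a)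

variable {C}

/-- `I_L(w)`: the set of simple reflections with target `w.tgt` below `w` in weak order. -/
def IL (w : Mor C) : Set I := {i | weakLe (sgen C w.tgt i) w}

/-- `m` is the longest element of `Hom(-,a) ∩ W_J(C)`, i.e. `w_J` at the object `a`. -/
def IsLongestPar (a : A) (J : Set I) (m : Mor C) : Prop :=
  m.tgt = a ∧ InParabolic J m ∧
    ∀ x : Mor C, x.tgt = a → InParabolic J x → weakLe x m

/-- `m` is the longest element `w_I` of `Hom(-,a)`. -/
def IsLongestAt (a : A) (m : Mor C) : Prop :=
  m.tgt = a ∧ ∀ x : Mor C, x.tgt = a → weakLe x m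

/-- `z` is the meet of `x` and `y` in `(Hom(-,a), ≤_R)`. -/
def IsMeet (a : A) (x y z : Mor C) : Prop :=
  z.tgt = a ∧ weakLe z x ∧ weakLe z y ∧
    ∀ t : Mor C, t.tgt = a → weakLe t x → weakLe t y → weakLe t z

/-- `z` is the join of `x` and `y` in `(Hom(-,a), ≤_R)`. -/
def IsJoin (a : A) (x y z : Mor C) : Prop :=
  z.tgt = a ∧ weakLe x z ∧ weakLe y z ∧
    ∀ t : Mor C, t.tgt = a → weakLe x t → weakLe y t → weakLe z t

/-- The left coset `u W_J(C) ⊆ Hom(-, u.tgt)`. -/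
def leftCoset (u : Mor C) (J : Set I) : Set (Mor C) :=
  {x | ∃ v : Mor C, InParabolic J v ∧ v.tgt = u.src ∧ x = u.comp v}

end CartanScheme

variable {I A : Type} [Fintype I] [DecidableEq I] [Fintype A] [Nonempty A] [DecidableEq A]

open CartanScheme

namespace CartanScheme

variable (C : CartanScheme I A)

/-! ### Walks -/

/-- The simple reflection `σ_i^a` as a `ℤ`-linear map. -/
def sigmaLin (a : A) (i : I) : (I → ℤ) →ₗ[ℤ] (I → ℤ) where
  toFun := C.sigma a i
  map_add' v w := by
    funext k
    by_cases hk : k = i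
    · simp only [sigma, hk, if_true, Pi.add_apply, mul_add, Finset.sum_add_distrib]; ring
    · simp [sigma, hk]
  map_smul' z v := by
    funext k
    by_cases hk : k = i
    · simp only [sigma, hk, if_true, Pi.smul_apply, smul_eq_mul, RingHom.id_apply, mul_sub,
        Finset.mul_sum]
      congr 1
      exact Finset.sum_congr rfl fun j _ => by ring
    · simp [sigma, hk]

theorem sigmaLin_apply (a : A) (i : I) (v : I → ℤ) : C.sigmaLin a i v = C.sigma a i v := rfl

/-- The end object of the walk that starts at `a` and crosses the letters of `l` from left to
right. Thus `l` read as a word of the groupoid has target `a` and source `walkEnd a l`. -/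
def walkEnd : A → List I → A
  | a, [] => a
  | a, i :: l => walkEnd (C.ρ i a) l

/-- The linear map `σ_{i_k} ⋯ σ_{i_1}^a` accumulated along the walk `[i_1, …, i_k]` from `a`,
that is, the inverse of the morphism with target `a` given by the word `i_1 ⋯ i_k`. -/
def walkMap : A → List I → ((I → ℤ) →ₗ[ℤ] (I → ℤ))
  | _, [] => LinearMap.id
  | a, i :: l => walkMap (C.ρ i a) l ∘ₗ C.sigmaLin a i

/-- Two words starting at `a` describe the same morphism with target `a`. -/
def WEq (a : A) (l m : List I) : Prop :=
  C.walkEnd a l = C.walkEnd a m ∧ C.walkMap a l = C.walkMap a m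

/-- The word `l` is of minimal length among the words equivalent to it from `a`. -/
def Red (a : A) (l : List I) : Prop := ∀ l', C.WEq a l' l → l.length ≤ l'.length

variable {C}

theorem sigmaLin_rho (a : A) (i j : I) (h : j = i) :
    C.sigmaLin (C.ρ i a) j = C.sigmaLin a j := by
  subst h
  ext v k
  simp [sigmaLin_apply, sigma, C.c_rho]

theorem sigmaLin_of_ne (a : A) {i k : I} (h : k ≠ i) (v : I → ℤ) :
    C.sigmaLin a i v k = v k := by
  simp [sigmaLin_apply, sigma, h]

theorem sigmaLin_self (a : A) (i : I) (v : I → ℤ) :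
    C.sigmaLin a i v i = v i - ∑ j, C.c a i j * v j := by
  simp [sigmaLin_apply, sigma]

theorem sigmaLin_single (a : A) (i : I) :
    C.sigmaLin a i (Pi.single i 1) = -Pi.single i 1 := by
  funext k
  by_cases h : k = i
  · subst h
    rw [sigmaLin_self]
    simp [Pi.single_apply, C.c_diag]
  · rw [sigmaLin_of_ne a h]; simp [h]

theorem sigmaLin_sigmaLin (a : A) (i : I) (v : I → ℤ) :
    C.sigmaLin a i (C.sigmaLin a i v) = v := by
  have key : C.sigmaLin a i v = v - (∑ j, C.c a i j * v j) • Pi.single i 1 := by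
    funext k
    by_cases h : k = i
    · subst h; rw [sigmaLin_self]; simp
    · rw [sigmaLin_of_ne a h]; simp [h]
  conv_lhs => rw [key]
  rw [map_sub, map_smul, sigmaLin_single, key]
  simp

theorem sigmaLin_rho_sigmaLin (a : A) (i : I) (v : I → ℤ) :
    C.sigmaLin (C.ρ i a) i (C.sigmaLin a i v) = v := by
  rw [sigmaLin_rho a i i rfl, sigmaLin_sigmaLin]

theorem walkEnd_append (a : A) (p q : List I) :
    C.walkEnd a (p ++ q) = C.walkEnd (C.walkEnd a p) q := by
  induction p generalizing a with
  | nil => rfl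
  | cons i p ih => exact ih _

theorem walkMap_append (a : A) (p q : List I) (v : I → ℤ) :
    C.walkMap a (p ++ q) v = C.walkMap (C.walkEnd a p) q (C.walkMap a p v) := by
  induction p generalizing a v with
  | nil => rfl
  | cons i p ih => exact ih _ _

theorem walkMap_cons (a : A) (i : I) (p : List I) (v : I → ℤ) :
    C.walkMap a (i :: p) v = C.walkMap (C.ρ i a) p (C.sigmaLin a i v) := rfl

theorem walkMap_snoc (a : A) (p : List I) (i : I) (v : I → ℤ) :
    C.walkMap a (p ++ [i]) v = C.sigmaLin (C.walkEnd a p) i (C.walkMap a p v) :=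
  walkMap_append a p [i] v

theorem walkEnd_reverse (a : A) (p : List I) : C.walkEnd (C.walkEnd a p) p.reverse = a := by
  induction p generalizing a with
  | nil => rfl
  | cons i p ih =>
    rw [List.reverse_cons, walkEnd_append]
    change C.ρ i (C.walkEnd (C.walkEnd (C.ρ i a) p) p.reverse) = a
    rw [ih, C.ρ_invol]

theorem walkMap_reverse (a : A) (p : List I) (v : I → ℤ) :
    C.walkMap (C.walkEnd a p) p.reverse (C.walkMap a p v) = v := by
  induction p generalizing a v with
  | nil => rfl
  | cons i p ih =>
    rw [List.reverse_cons, walkMap_snoc, walkMap_cons]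
    change C.sigmaLin (C.walkEnd (C.walkEnd (C.ρ i a) p) p.reverse) i
      (C.walkMap (C.walkEnd (C.ρ i a) p) p.reverse _) = v
    rw [ih, walkEnd_reverse, sigmaLin_rho_sigmaLin]

theorem walkMap_reverse' (a : A) (p : List I) (v : I → ℤ) :
    C.walkMap a p (C.walkMap (C.walkEnd a p) p.reverse v) = v := by
  have := walkMap_reverse (C := C) (C.walkEnd a p) p.reverse v
  rwa [walkEnd_reverse, List.reverse_reverse] at this

theorem walkMap_injective (a : A) (p : List I) : Function.Injective (C.walkMap a p) :=
  Function.LeftInverse.injective (walkMap_reverse a p)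

theorem WEq.refl (a : A) (l : List I) : C.WEq a l l := ⟨rfl, rfl⟩

theorem WEq.symm {a : A} {l l' : List I} (h : C.WEq a l l') : C.WEq a l' l :=
  ⟨h.1.symm, h.2.symm⟩

theorem WEq.trans {a : A} {l l' l'' : List I} (h : C.WEq a l l') (h' : C.WEq a l' l'') :
    C.WEq a l l'' := ⟨h.1.trans h'.1, h.2.trans h'.2⟩

theorem WEq.append_left {a : A} (p : List I) {q q' : List I}
    (h : C.WEq (C.walkEnd a p) q q') : C.WEq a (p ++ q) (p ++ q') := by
  refine ⟨?_, ?_⟩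
  · rw [walkEnd_append, walkEnd_append, h.1]
  · refine LinearMap.ext fun v => ?_
    rw [walkMap_append, walkMap_append, h.2]

theorem WEq.append_right {a : A} {p p' : List I} (h : C.WEq a p p') (q : List I) :
    C.WEq a (p ++ q) (p' ++ q) := by
  refine ⟨?_, ?_⟩
  · rw [walkEnd_append, walkEnd_append, h.1]
  · refine LinearMap.ext fun v => ?_
    rw [walkMap_append, walkMap_append, h.1, h.2]

theorem WEq.cons {a : A} (i : I) {q q' : List I}
    (h : C.WEq (C.ρ i a) q q') : C.WEq a (i :: q) (i :: q') :=
  WEq.append_left [i] h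

theorem WEq.cancel (a : A) (i : I) (l : List I) : C.WEq a (i :: i :: l) l := by
  refine ⟨?_, LinearMap.ext fun v => ?_⟩
  · change C.walkEnd (C.ρ i (C.ρ i a)) l = _
    rw [C.ρ_invol]
  · rw [walkMap_cons, walkMap_cons, sigmaLin_rho_sigmaLin, C.ρ_invol]

theorem WEq.reverse {a : A} {p p' : List I} (h : C.WEq a p p') :
    C.WEq (C.walkEnd a p) p.reverse p'.reverse := by
  refine ⟨?_, LinearMap.ext fun v => ?_⟩
  · rw [walkEnd_reverse, h.1, walkEnd_reverse]
  · apply walkMap_injective a p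
    rw [walkMap_reverse', h.2, h.1, walkMap_reverse']

theorem Red.of_wEq {a : A} {l l' : List I} (h : C.Red a l) (h' : C.WEq a l' l)
    (hl : l'.length ≤ l.length) : C.Red a l' :=
  fun _ hm => hl.trans (h _ (hm.trans h'))

theorem Red.left {a : A} {p q : List I} (h : C.Red a (p ++ q)) : C.Red a p := by
  intro p' hp'
  have := h _ (hp'.append_right q)
  simp only [List.length_append] at this
  omega

theorem Red.right {a : A} {p q : List I} (h : C.Red a (p ++ q)) :
    C.Red (C.walkEnd a p) q := by
  intro q' hq'
  have := h _ (hq'.append_left p)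
  simp only [List.length_append] at this
  omega

/-- Crossing letters of `K` only changes coordinates in `K`. -/
theorem walkMap_apply_of_notMem {K : Set I} {k : I} (hk : k ∉ K) (a : A) (p : List I)
    (hp : ∀ i ∈ p, i ∈ K) (v : I → ℤ) : C.walkMap a p v k = v k := by
  induction p generalizing a v with
  | nil => rfl
  | cons i p ih =>
    rw [walkMap_cons, ih _ (fun j hj => hp j (List.mem_cons_of_mem _ hj)), sigmaLin_of_ne]
    rintro rfl
    exact hk (hp _ List.mem_cons_self)

theorem exists_red (a : A) (l : List I) : ∃ l', C.WEq a l' l ∧ C.Red a l' := by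
  induction h : l.length using Nat.strong_induction_on generalizing l with
  | _ n ih =>
    by_cases hl : C.Red a l
    · exact ⟨l, WEq.refl a l, hl⟩
    · simp only [Red, not_forall, not_le] at hl
      obtain ⟨l', h1, h2⟩ := hl
      obtain ⟨l'', h3, h4⟩ := ih _ (h ▸ h2) l' rfl
      exact ⟨l'', h3.trans h1, h4⟩

/-! ### Roots -/

theorem single_mem_roots (a : A) (i : I) : (Pi.single i 1 : I → ℤ) ∈ C.roots a :=
  ⟨a, [], i, rfl, rfl⟩

theorem sigmaLin_mem_roots {a : A} {v : I → ℤ} (i : I) (h : v ∈ C.roots a) :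
    C.sigmaLin a i v ∈ C.roots (C.ρ i a) := by
  obtain ⟨b, l, j, rfl, rfl⟩ := h
  exact ⟨b, i :: l, j, rfl, rfl⟩

theorem walkMap_mem_roots {a : A} {v : I → ℤ} (p : List I) (h : v ∈ C.roots a) :
    C.walkMap a p v ∈ C.roots (C.walkEnd a p) := by
  induction p generalizing a v with
  | nil => exact h
  | cons i p ih => exact ih (sigmaLin_mem_roots i h)

theorem mem_roots_of_walkMap {a : A} {v : I → ℤ} (p : List I)
    (h : C.walkMap a p v ∈ C.roots (C.walkEnd a p)) : v ∈ C.roots a := by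
  have := walkMap_mem_roots p.reverse h
  rwa [walkMap_reverse, walkEnd_reverse] at this

theorem neg_mem_roots {a : A} {v : I → ℤ} (h : v ∈ C.roots a) : -v ∈ C.roots a := by
  obtain ⟨b, l, j, rfl, rfl⟩ := h
  have key : ∀ l : List I, ∀ v, C.wordMap b l (-v) = -C.wordMap b l v := by
    intro l v
    induction l with
    | nil => rfl
    | cons i l ih =>
      change C.sigmaLin _ i (C.wordMap b l (-v)) = -C.sigmaLin _ i (C.wordMap b l v)
      rw [ih, map_neg]
  refine ⟨C.ρ j b, l ++ [j], j, ?_, ?_⟩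
  · rw [wordTarget_append]; simp [wordTarget, C.ρ_invol]
  · have h1 : C.wordTarget (C.ρ j b) [j] = b := C.ρ_invol j b
    have h2 : C.wordMap (C.ρ j b) [j] (Pi.single j 1) = -Pi.single j 1 := sigmaLin_single _ _
    rw [wordMap_append, Function.comp_apply, h1, h2, key]

theorem ne_zero_of_mem_roots {a : A} {v : I → ℤ} (h : v ∈ C.roots a) : v ≠ 0 := by
  obtain ⟨b, l, j, rfl, rfl⟩ := h
  have key : ∀ l : List I, ∀ v, C.wordMap b l v = 0 → v = 0 := by
    intro l
    induction l with
    | nil => exact fun _ h => h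
    | cons i l ih =>
      intro v hv
      change C.sigmaLin _ i (C.wordMap b l v) = 0 at hv
      apply ih
      rw [← sigmaLin_sigmaLin (C := C) (C.wordTarget b l) i (C.wordMap b l v), hv, map_zero]
  intro h0
  have := congrFun (key _ _ h0) j
  simp at this

theorem le_zero_of_not_nonneg (hC : C.IsFRS) {a : A} {v : I → ℤ} (h : v ∈ C.roots a)
    (hv : ¬ 0 ≤ v) : v ≤ 0 :=
  (hC.2.1 a v h).resolve_left hv

theorem not_nonneg_of_le_zero {a : A} {v : I → ℤ} (h : v ∈ C.roots a)
    (hv : v ≤ 0) : ¬ 0 ≤ v :=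
  fun h0 => ne_zero_of_mem_roots h (le_antisymm hv h0)

/-- The only positive root made negative by `σ_s` is the simple root `α_s`. -/
theorem eq_single_of_sigmaLin (hC : C.IsFRS) {a : A} {v : I → ℤ} (h : v ∈ C.roots a)
    (hv : 0 ≤ v) {s : I} (hs : ¬ 0 ≤ C.sigmaLin a s v) : v = Pi.single s 1 := by
  have h1 := le_zero_of_not_nonneg hC (sigmaLin_mem_roots s h) hs
  have h2 : v = v s • Pi.single s 1 := by
    funext k
    by_cases hk : k = s
    · subst hk; simp
    · have h3 := h1 k
      rw [sigmaLin_of_ne a hk] at h3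
      have h4 := hv k
      simp only [Pi.zero_apply] at h3 h4
      simp [hk]; omega
  rcases hC.2.2.1 a s v h ⟨_, h2⟩ with h3 | h3
  · exact h3
  · have := hv s
    rw [h3] at this
    simp at this

/-- A linear map that is nonnegative on the simple roots in `K` is nonnegative on every
nonnegative vector supported in `K`. -/
theorem map_nonneg_of_support (f : (I → ℤ) →ₗ[ℤ] (I → ℤ)) {K : Set I} {v : I → ℤ}
    (hv : 0 ≤ v) (hK : ∀ k ∉ K, v k = 0) (hf : ∀ k ∈ K, 0 ≤ f (Pi.single k 1)) : 0 ≤ f v := by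
  rw [LinearMap.pi_apply_eq_sum_univ f v]
  refine Finset.sum_nonneg fun k _ => ?_
  by_cases hk : k ∈ K
  · have h1 : (fun j => if k = j then (1 : ℤ) else 0) = Pi.single k 1 := by
      funext j; simp [Pi.single_apply, eq_comm]
    rw [h1]
    exact smul_nonneg (hv k) (hf k hk)
  · rw [hK k hk, zero_smul]

theorem map_nonpos_of_support (f : (I → ℤ) →ₗ[ℤ] (I → ℤ)) {K : Set I} {v : I → ℤ}
    (hv : 0 ≤ v) (hK : ∀ k ∉ K, v k = 0) (hf : ∀ k ∈ K, f (Pi.single k 1) ≤ 0) : f v ≤ 0 := by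
  have := map_nonneg_of_support (-f) hv hK fun k hk => by simpa using hf k hk
  simpa using this

/-! ### Rank two -/

variable (C) in
/-- The positive roots at `a` supported in `K`. -/
def posIn (a : A) (K : Set I) : Set (I → ℤ) := {v ∈ C.roots a | 0 ≤ v ∧ ∀ k ∉ K, v k = 0}

variable (C) in
/-- The positive roots at `a` supported in `K` that become negative along the walk `p`. -/
def negSet (a : A) (K : Set I) (p : List I) : Set (I → ℤ) :=
  {v ∈ C.posIn a K | ¬ 0 ≤ C.walkMap a p v}

theorem posIn_finite (hC : C.IsFRS) (a : A) (K : Set I) : (C.posIn a K).Finite :=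
  (hC.1 a).subset fun _ h => h.1

theorem negSet_finite (hC : C.IsFRS) (a : A) (K : Set I) (p : List I) :
    (C.negSet a K p).Finite :=
  (posIn_finite hC a K).subset fun _ h => h.1

theorem single_mem_posIn (a : A) {K : Set I} {k : I} (hk : k ∈ K) :
    (Pi.single k 1 : I → ℤ) ∈ C.posIn a K := by
  refine ⟨single_mem_roots a k, by simp, fun l hl => ?_⟩
  have : l ≠ k := by rintro rfl; exact hl hk
  simp [this]

/-- Each step of a walk makes at most one further positive root negative. -/
theorem ncard_negSet_le (hC : C.IsFRS) (a : A) (K : Set I) (p : List I) :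
    (C.negSet a K p).ncard ≤ p.length := by
  induction p using List.reverseRecOn with
  | nil =>
    have : C.negSet a K [] = ∅ := by
      ext v
      simp only [negSet, walkMap, LinearMap.id_apply, Set.mem_ofPred_eq, Set.mem_empty_iff_false,
        iff_false, not_and, not_not]
      exact fun h => h.2.1
    simp [this]
  | append_singleton p s ih =>
    set u := C.walkMap (C.walkEnd a p) p.reverse (Pi.single s 1) with hu
    have hsub : C.negSet a K (p ++ [s]) ⊆ insert u (C.negSet a K p) := by
      rintro v ⟨hv, hneg⟩
      by_cases h0 : 0 ≤ C.walkMap a p v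
      · left
        rw [walkMap_snoc] at hneg
        have := eq_single_of_sigmaLin hC (walkMap_mem_roots p hv.1) h0 hneg
        rw [hu, ← this, walkMap_reverse]
      · exact Or.inr ⟨hv, h0⟩
    calc _ ≤ (insert u (C.negSet a K p)).ncard :=
          Set.ncard_le_ncard hsub ((negSet_finite hC a K p).insert u)
      _ ≤ (C.negSet a K p).ncard + 1 := Set.ncard_insert_le _ _
      _ ≤ _ := by simpa using ih

/-- If every positive root supported in `K` becomes negative along `p`, then `p` is at least as
long as the number of these roots. -/
theorem ncard_posIn_le (hC : C.IsFRS) {a : A} {K : Set I} {p : List I}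
    (h : ∀ v ∈ C.posIn a K, ¬ 0 ≤ C.walkMap a p v) : (C.posIn a K).ncard ≤ p.length :=
  have hsub : C.posIn a K ⊆ C.negSet a K p := fun v hv => ⟨hv, h v hv⟩
  (Set.ncard_le_ncard hsub (negSet_finite hC a K p)).trans (ncard_negSet_le hC a K p)

/-- The alternating word `t i t i ⋯` with `k` letters. -/
def alt : I → I → ℕ → List I
  | _, _, 0 => []
  | t, i, k + 1 => t :: alt i t k

/-- The letter that follows the alternating word `alt t i k`. -/
def nxt : I → I → ℕ → I
  | t, _, 0 => t
  | t, i, k + 1 => nxt i t k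

theorem alt_snoc (t i : I) (k : ℕ) : alt t i (k + 1) = alt t i k ++ [nxt t i k] := by
  induction k generalizing t i with
  | zero => rfl
  | succ k ih =>
    change t :: alt i t (k + 1) = _
    rw [ih]; rfl

theorem alt_length (t i : I) (k : ℕ) : (alt t i k).length = k := by
  induction k generalizing t i with
  | zero => rfl
  | succ k ih => simp [alt, ih]

theorem mem_alt (t i : I) (k : ℕ) : ∀ j ∈ alt t i k, j ∈ ({t, i} : Set I) := by
  induction k generalizing t i with
  | zero => simp [alt]
  | succ k ih =>
    intro j hj
    rcases List.mem_cons.1 hj with rfl | hj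
    · simp
    · rw [Set.pair_comm]; exact ih i t j hj

theorem nxt_pair (t i : I) (k : ℕ) : ({t, i} : Set I) = {nxt t i k, nxt t i (k + 1)} := by
  induction k generalizing t i with
  | zero => rfl
  | succ k ih => rw [Set.pair_comm]; exact ih i t

theorem nxt_two_mul (t i : I) (k : ℕ) : nxt t i (2 * k) = t := by
  induction k with
  | zero => rfl
  | succ k ih => exact ih

theorem alt_append (t i : I) (m k : ℕ) : ∃ r, alt t i (m + k) = alt t i m ++ r := by
  induction k with
  | zero => exact ⟨[], by simp⟩
  | succ k ih =>
    obtain ⟨r, hr⟩ := ih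
    exact ⟨r ++ [nxt t i (m + k)], by rw [← add_assoc, alt_snoc, hr, List.append_assoc]⟩

theorem alt_append_reverse (t i : I) (m : ℕ) :
    alt t i m ++ (alt i t m).reverse = alt t i (2 * m) := by
  induction m generalizing t i with
  | zero => rfl
  | succ m ih =>
    have h : alt t i (2 * (m + 1)) = t :: (alt i t (2 * m) ++ [i]) := by
      change t :: alt i t (2 * m + 1) = _
      rw [alt_snoc, nxt_two_mul]
    rw [h, ← ih]
    simp [alt]

theorem walkEnd_alt_two_mul (a : A) (t i : I) (m : ℕ) :
    C.walkEnd a (alt t i (2 * m)) = (fun x => C.ρ i (C.ρ t x))^[m] a := by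
  induction m generalizing a with
  | zero => rfl
  | succ m ih => exact ih (C.ρ i (C.ρ t a))

theorem walkMap_support {a : A} {K : Set I} {p : List I} (hp : ∀ j ∈ p, j ∈ K) {v : I → ℤ}
    (hv : ∀ k ∉ K, v k = 0) : ∀ k ∉ K, C.walkMap a p v k = 0 := fun k hk => by
  rw [walkMap_apply_of_notMem hk a p hp, hv k hk]

theorem neg_of_posIn {a : A} {K : Set I} {v : I → ℤ} (hv : v ∈ C.roots a) (h : v ≤ 0)
    (hK : ∀ k ∉ K, v k = 0) : -v ∈ C.posIn a K :=
  ⟨neg_mem_roots hv, by simpa using h, fun k hk => by simp [hK k hk]⟩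

/-- An alternating word with fewer letters than there are positive roots in the rank two system
can be extended by one more letter so that one more positive root becomes negative, namely the
preimage `v` of the simple root of that letter. -/
theorem nonneg_of_walkMap_alt (hC : C.IsFRS) (a : A) (t i : I) (k : ℕ)
    (hk : k < (C.posIn a {t, i}).ncard) (v : I → ℤ)
    (hv : C.walkMap a (alt t i k) v = Pi.single (nxt t i k) 1) : 0 ≤ v := by
  induction k generalizing v with
  | zero =>
    have : v = Pi.single t 1 := hv
    rw [this]; simp
  | succ k ih =>
    by_contra hneg
    set p := alt t i (k + 1) with hp
    set f := C.walkMap (C.walkEnd a p) p.reverse with hf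
    have hvf : v = f (Pi.single (nxt t i (k + 1)) 1) := by
      rw [hf, ← hv, walkMap_reverse]
    have hroot : ∀ j, f (Pi.single j 1) ∈ C.roots a := fun j => by
      have := walkMap_mem_roots p.reverse (single_mem_roots (C := C) (C.walkEnd a p) j)
      rwa [walkEnd_reverse] at this
    have h1 : f (Pi.single (nxt t i (k + 1)) 1) ≤ 0 :=
      le_zero_of_not_nonneg hC (hroot _) (hvf ▸ hneg)
    have h2 : f (Pi.single (nxt t i k) 1) ≤ 0 := by
      have h3 : C.walkMap a p (f (Pi.single (nxt t i k) 1)) = Pi.single (nxt t i k) 1 :=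
        walkMap_reverse' a p _
      rw [hp, alt_snoc, walkMap_snoc] at h3
      have h4 := congrArg (C.sigmaLin (C.walkEnd a (alt t i k)) (nxt t i k)) h3
      rw [sigmaLin_sigmaLin, sigmaLin_single] at h4
      have h5 := ih (by omega) (-f (Pi.single (nxt t i k) 1)) (by rw [map_neg, h4, neg_neg])
      simpa using h5
    have h3 : (C.posIn a {t, i}).ncard ≤ p.length := by
      refine ncard_posIn_le hC fun w hw h0 => ?_
      have h4 : f (C.walkMap a p w) ≤ 0 := by
        refine map_nonpos_of_support f h0
          (walkMap_support (hp ▸ mem_alt t i (k + 1)) hw.2.2) ?_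
        rw [nxt_pair t i k]
        rintro j (rfl | rfl)
        · exact h2
        · exact h1
      rw [hf, walkMap_reverse] at h4
      exact not_nonneg_of_le_zero hw.1 h4 hw.2.1
    rw [hp, alt_length] at h3
    omega

/-- Up to the maximal length, a root made negative by an alternating word stays negative. -/
theorem negSet_alt_subset (hC : C.IsFRS) (a : A) (t i : I) (k : ℕ)
    (hk : k < (C.posIn a {t, i}).ncard) :
    C.negSet a {t, i} (alt t i k) ⊆ C.negSet a {t, i} (alt t i (k + 1)) := by
  rintro v ⟨hv, hneg⟩
  refine ⟨hv, fun h0 => ?_⟩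
  rw [alt_snoc, walkMap_snoc] at h0
  have h1 := walkMap_mem_roots (alt t i k) hv.1
  have h2 : -C.walkMap a (alt t i k) v = Pi.single (nxt t i k) 1 := by
    refine eq_single_of_sigmaLin hC (neg_mem_roots h1) ?_ (s := nxt t i k) fun h3 => ?_
    · simpa using le_zero_of_not_nonneg hC h1 hneg
    · rw [map_neg] at h3
      exact not_nonneg_of_le_zero (sigmaLin_mem_roots _ h1) (by simpa using h3) h0
  have h3 := nonneg_of_walkMap_alt hC a t i k hk (-v) (by rw [map_neg, h2])
  exact not_nonneg_of_le_zero hv.1 (by simpa using h3) hv.2.1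

theorem le_ncard_negSet_alt (hC : C.IsFRS) (a : A) (t i : I) (k : ℕ)
    (hk : k ≤ (C.posIn a {t, i}).ncard) : k ≤ (C.negSet a {t, i} (alt t i k)).ncard := by
  induction k with
  | zero => exact Nat.zero_le _
  | succ k ih =>
    set p := alt t i k with hp
    set u := C.walkMap (C.walkEnd a p) p.reverse (Pi.single (nxt t i k) 1) with hu
    have hgu : C.walkMap a p u = Pi.single (nxt t i k) 1 := walkMap_reverse' a p _
    have hu0 : 0 ≤ u := nonneg_of_walkMap_alt hC a t i k (by omega) u hgu
    have huroot : u ∈ C.roots a :=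
      mem_roots_of_walkMap p (by rw [hgu]; exact single_mem_roots _ _)
    have hnxt : nxt t i k ∈ ({t, i} : Set I) := by rw [nxt_pair t i k]; simp
    have hupos : u ∈ C.posIn a {t, i} := by
      refine ⟨huroot, hu0, ?_⟩
      refine walkMap_support (fun j hj => mem_alt t i k j (by simpa [hp] using hj)) ?_
      exact (single_mem_posIn (C := C) a hnxt).2.2
    have hunot : u ∉ C.negSet a {t, i} p := fun h => h.2 (by rw [hgu]; simp)
    have hunew : u ∈ C.negSet a {t, i} (alt t i (k + 1)) := by
      refine ⟨hupos, fun h0 => ?_⟩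
      rw [alt_snoc, walkMap_snoc, ← hp, hgu, sigmaLin_single] at h0
      have := h0 (nxt t i k)
      simp at this
    have hsub : insert u (C.negSet a {t, i} p) ⊆ C.negSet a {t, i} (alt t i (k + 1)) :=
      Set.insert_subset hunew (negSet_alt_subset hC a t i k (by omega))
    have h1 := Set.ncard_le_ncard hsub (negSet_finite hC _ _ _)
    rw [Set.ncard_insert_of_notMem hunot (negSet_finite hC _ _ _)] at h1
    have := ih (by omega)
    omega

/-- The alternating word of maximal length makes every positive root of the rank two system
negative. -/
theorem negSet_alt_full (hC : C.IsFRS) (a : A) (t i : I) {v : I → ℤ}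
    (hv : v ∈ C.posIn a {t, i}) :
    C.walkMap a (alt t i (C.posIn a {t, i}).ncard) v ≤ 0 := by
  have h := Set.eq_of_subset_of_ncard_le (s := C.negSet a {t, i} _) (fun _ h => h.1)
    (le_ncard_negSet_alt hC a t i _ le_rfl) (posIn_finite hC a _)
  have h1 : v ∈ C.negSet a {t, i} (alt t i (C.posIn a {t, i}).ncard) := by rw [h]; exact hv
  exact le_zero_of_not_nonneg hC (walkMap_mem_roots _ hv.1) h1.2

/-- An alternating word starting with `t` that is shorter than the maximal one keeps `α_i`
positive. -/
theorem walkMap_alt_single_nonneg (hC : C.IsFRS) (a : A) (t i : I) (k : ℕ)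
    (hk : k < (C.posIn a {t, i}).ncard) : 0 ≤ C.walkMap a (alt t i k) (Pi.single i 1) := by
  rcases Nat.eq_zero_or_pos k with rfl | hpos
  · change (0 : I → ℤ) ≤ Pi.single i 1
    simp
  by_contra hneg
  have hi := le_zero_of_not_nonneg hC (walkMap_mem_roots _ (single_mem_roots a i)) hneg
  have ht : ∀ n, 1 ≤ n → n < (C.posIn a {t, i}).ncard →
      (Pi.single t 1 : I → ℤ) ∈ C.negSet a {t, i} (alt t i n) := by
    intro n hn hn'
    induction n, hn using Nat.le_induction with
    | base =>
      refine ⟨single_mem_posIn a (by simp), fun h => ?_⟩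
      have h2 : C.walkMap a (alt t i 1) (Pi.single t 1) = -Pi.single t 1 := sigmaLin_single a t
      rw [h2] at h
      have := h t
      simp at this
    | succ n hn ih => exact negSet_alt_subset hC a t i n (by omega) (ih (by omega))
  have ht' := le_zero_of_not_nonneg hC (walkMap_mem_roots _ (single_mem_roots a t))
    (ht k hpos hk).2
  have : (C.posIn a {t, i}).ncard ≤ (alt t i k).length := by
    refine ncard_posIn_le hC fun v hv => ?_
    refine not_nonneg_of_le_zero (walkMap_mem_roots _ hv.1) ?_
    refine map_nonpos_of_support _ hv.2.1 hv.2.2 ?_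
    rintro j (rfl | rfl)
    · exact ht'
    · exact hi
  rw [alt_length] at this
  omega

theorem inter_roots_eq_posIn (a : A) {i j : I} (hij : i ≠ j) :
    C.roots a ∩ {α | ∃ m n : ℕ, α = (m : ℤ) • Pi.single i 1 + (n : ℤ) • Pi.single j 1} =
      C.posIn a {i, j} := by
  ext v
  constructor
  · rintro ⟨hv, m, n, rfl⟩
    refine ⟨hv, fun k => ?_, fun k hk => ?_⟩
    · simp only [Pi.zero_apply, Pi.add_apply, Pi.smul_apply, smul_eq_mul, Pi.single_apply]
      split_ifs <;> positivity
    · simp only [Set.mem_insert_iff, Set.mem_singleton_iff, not_or] at hk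
      simp [hk.1, hk.2]
  · rintro ⟨hv, h0, hK⟩
    refine ⟨hv, (v i).toNat, (v j).toNat, ?_⟩
    rw [Int.toNat_of_nonneg (h0 i), Int.toNat_of_nonneg (h0 j)]
    funext k
    by_cases hki : k = i
    · subst hki; simp [hij]
    · by_cases hkj : k = j
      · subst hkj; simp [hki]
      · rw [hK k (by simp [hki, hkj])]; simp [hki, hkj]

section Loop

variable {a : A} {t i : I} {m : ℕ}

/-- Axiom (R4) says that the rank two loop ends where it starts. -/
theorem walkEnd_loop (hC : C.IsFRS) (hti : t ≠ i) (hm : m = (C.posIn a {t, i}).ncard) :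
    C.walkEnd a (alt t i (2 * m)) = a := by
  rw [walkEnd_alt_two_mul, hm, Set.pair_comm, ← inter_roots_eq_posIn a hti.symm]
  exact hC.2.2.2 a i t hti.symm

theorem walkEnd_alt_eq (hC : C.IsFRS) (hti : t ≠ i) (hm : m = (C.posIn a {t, i}).ncard) :
    C.walkEnd a (alt t i m) = C.walkEnd a (alt i t m) := by
  have h := walkEnd_loop hC hti hm
  rw [← alt_append_reverse, walkEnd_append] at h
  have h2 := walkEnd_reverse (C := C) (C.walkEnd a (alt t i m)) (alt i t m).reverse
  rw [h, List.reverse_reverse] at h2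
  exact h2.symm

theorem loop_reverse (hC : C.IsFRS) (hti : t ≠ i) (hm : m = (C.posIn a {t, i}).ncard)
    (v : I → ℤ) : C.walkMap a (alt i t (2 * m)) (C.walkMap a (alt t i (2 * m)) v) = v := by
  have h := walkMap_reverse (C := C) a (alt t i (2 * m)) v
  rw [walkEnd_loop hC hti hm] at h
  rwa [← alt_append_reverse t i, List.reverse_append, List.reverse_reverse,
    alt_append_reverse i t, alt_append_reverse t i] at h

/-- Both alternating words of maximal length exchange positive and negative roots of the rank two
system, so their quotient preserves positivity there. -/
theorem loop_nonneg (hC : C.IsFRS) (hti : t ≠ i) (hm : m = (C.posIn a {t, i}).ncard)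
    {v : I → ℤ} (hv : v ∈ C.posIn a {t, i}) : 0 ≤ C.walkMap a (alt t i (2 * m)) v := by
  by_contra hneg
  have hroot := walkMap_mem_roots (alt t i (2 * m)) hv.1
  have hle := le_zero_of_not_nonneg hC hroot hneg
  rw [walkEnd_loop hC hti hm] at hroot
  have hpos := neg_of_posIn hroot hle (walkMap_support (mem_alt t i (2 * m)) hv.2.2)
  have h1 : C.walkMap a (alt i t m) (C.walkMap a (alt t i (2 * m)) v) =
      C.walkMap a (alt t i m) v := by
    rw [← alt_append_reverse, walkMap_append, walkEnd_alt_eq hC hti hm, walkMap_reverse']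
  have h2 : C.walkMap a (alt t i m) v ≤ 0 := by
    rw [hm]; exact negSet_alt_full hC a t i hv
  have h3 : C.walkMap a (alt i t m) (-C.walkMap a (alt t i (2 * m)) v) ≤ 0 := by
    rw [Set.pair_comm] at hpos hm
    have := negSet_alt_full hC a i t hpos
    rwa [← hm] at this
  rw [map_neg, h1] at h3
  exact not_nonneg_of_le_zero (walkMap_mem_roots _ hv.1) h2 (by simpa using h3)

/-- The determinant of a walk on the span of `α_t` and `α_i`. -/
theorem walkMap_det (a : A) (hti : t ≠ i) (p : List I) (hp : ∀ j ∈ p, j ∈ ({t, i} : Set I)) :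
    C.walkMap a p (Pi.single t 1) t * C.walkMap a p (Pi.single i 1) i -
      C.walkMap a p (Pi.single t 1) i * C.walkMap a p (Pi.single i 1) t = (-1) ^ p.length := by
  induction p using List.reverseRecOn with
  | nil => simp [walkMap, hti]
  | append_singleton p s ih =>
    have hp' : ∀ j ∈ p, j ∈ ({t, i} : Set I) := fun j hj => hp j (by simp [hj])
    have ih := ih hp'
    have hs := hp s (by simp)
    have ht := walkMap_support (C := C) (a := a) hp'
      (single_mem_posIn (C := C) a (show t ∈ ({t, i} : Set I) by simp)).2.2
    have hi := walkMap_support (C := C) (a := a) hp'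
      (single_mem_posIn (C := C) a (show i ∈ ({t, i} : Set I) by simp)).2.2
    have hsum : ∀ b s, ∀ v : I → ℤ, (∀ k ∉ ({t, i} : Set I), v k = 0) →
        ∑ j, C.c b s j * v j = C.c b s t * v t + C.c b s i * v i := fun b s v hv =>
      Fintype.sum_eq_add t i hti fun k hk => by rw [hv k (by simp [hk.1, hk.2]), mul_zero]
    simp only [walkMap_snoc, List.length_append, List.length_singleton, pow_succ, ← ih]
    rcases hs with rfl | rfl
    · rw [sigmaLin_self, sigmaLin_self, sigmaLin_of_ne _ hti.symm, sigmaLin_of_ne _ hti.symm,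
        hsum _ _ _ ht, hsum _ _ _ hi, C.c_diag]
      ring
    · rw [sigmaLin_self, sigmaLin_self, sigmaLin_of_ne _ hti, sigmaLin_of_ne _ hti,
        hsum _ _ _ ht, hsum _ _ _ hi, C.c_diag]
      ring

theorem eq_of_support (hti : t ≠ i) {v : I → ℤ} (hv : ∀ k ∉ ({t, i} : Set I), v k = 0) :
    v = v t • Pi.single t 1 + v i • Pi.single i 1 := by
  funext k
  by_cases hkt : k = t
  · subst hkt; simp [hti]
  · by_cases hki : k = i
    · subst hki; simp [hkt]
    · rw [hv k (by simp [hki, hkt])]; simp [hki, hkt]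

/-- On the plane spanned by `α_t` and `α_i` the loop is a nonnegative integer matrix of
determinant one with nonnegative inverse, hence trivial. -/
theorem loop_single (hC : C.IsFRS) (hti : t ≠ i) (hm : m = (C.posIn a {t, i}).ncard) :
    C.walkMap a (alt t i (2 * m)) (Pi.single t 1) = Pi.single t 1 ∧
      C.walkMap a (alt t i (2 * m)) (Pi.single i 1) = Pi.single i 1 := by
  have hm' : m = (C.posIn a {i, t}).ncard := by rw [Set.pair_comm]; exact hm
  have htm := single_mem_posIn (C := C) a (show t ∈ ({t, i} : Set I) by simp)
  have him := single_mem_posIn (C := C) a (show i ∈ ({t, i} : Set I) by simp)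
  have hinv := loop_reverse hC hti hm
  have ht' := loop_nonneg hC hti.symm hm' (by rw [Set.pair_comm]; exact htm)
  have hi' := loop_nonneg hC hti.symm hm' (by rw [Set.pair_comm]; exact him)
  have ht := loop_nonneg hC hti hm htm
  have hi := loop_nonneg hC hti hm him
  have hdet := walkMap_det (C := C) a hti _ (mem_alt t i (2 * m))
  rw [alt_length, pow_mul, neg_one_sq, one_pow] at hdet
  have et := eq_of_support hti (walkMap_support (C := C) (a := a) (mem_alt t i (2 * m)) htm.2.2)
  have ei := eq_of_support hti (walkMap_support (C := C) (a := a) (mem_alt t i (2 * m)) him.2.2)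
  set h := C.walkMap a (alt t i (2 * m))
  set h' := C.walkMap a (alt i t (2 * m))
  set x := h (Pi.single t 1) t
  set y := h (Pi.single t 1) i
  set z := h (Pi.single i 1) t
  set w := h (Pi.single i 1) i
  have h1 : h' (Pi.single t 1) = w • Pi.single t 1 - y • Pi.single i 1 := by
    rw [← hinv (w • Pi.single t 1 - y • Pi.single i 1), map_sub, map_smul, map_smul, et, ei]
    congr 1
    linear_combination (-hdet) • (Pi.single t 1 : I → ℤ)
  have h2 : h' (Pi.single i 1) = x • Pi.single i 1 - z • Pi.single t 1 := by
    rw [← hinv (x • Pi.single i 1 - z • Pi.single t 1), map_sub, map_smul, map_smul, et, ei]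
    congr 1
    linear_combination (-hdet) • (Pi.single i 1 : I → ℤ)
  have hx : 0 ≤ x := ht t
  have hy : 0 ≤ y := ht i
  have hz : 0 ≤ z := hi t
  have hw : 0 ≤ w := hi i
  have hy' : y ≤ 0 := by
    have := ht' i
    rw [h1] at this
    simpa [hti.symm] using this
  have hz' : z ≤ 0 := by
    have := hi' t
    rw [h2] at this
    simpa [hti] using this
  have hy0 : y = 0 := le_antisymm hy' hy
  have hz0 : z = 0 := le_antisymm hz' hz
  rw [hy0, zero_mul, sub_zero] at hdet
  have hx1 : x = 1 := Int.eq_one_of_mul_eq_one_right hx hdet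
  have hw1 : w = 1 := by rw [hx1, one_mul] at hdet; exact hdet
  rw [hy0, hx1] at et
  rw [hz0, hw1] at ei
  exact ⟨by simpa using et, by simpa using ei⟩

/-- Words in `K` keep `α_l` positive for `l ∉ K`, since the `l`-th coordinate stays `1`. -/
theorem walkMap_single_nonneg_of_notMem (hC : C.IsFRS) {K : Set I} {l : I} (hl : l ∉ K)
    (p : List I) (hp : ∀ j ∈ p, j ∈ K) : 0 ≤ C.walkMap a p (Pi.single l 1) := by
  by_contra hneg
  have h1 := le_zero_of_not_nonneg hC (walkMap_mem_roots p (single_mem_roots a l)) hneg l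
  rw [walkMap_apply_of_notMem hl a p hp] at h1
  simp at h1

/-- The loop and its inverse send a simple root `α_l` outside the plane to positive roots
`α_l + d` and `α_l - d` with `d` in the plane, so `d = 0`. -/
theorem loop_eq_id (hC : C.IsFRS) (hti : t ≠ i) (hm : m = (C.posIn a {t, i}).ncard) :
    C.walkMap a (alt t i (2 * m)) = LinearMap.id := by
  have hm' : m = (C.posIn a {i, t}).ncard := by rw [Set.pair_comm]; exact hm
  obtain ⟨ht, hi⟩ := loop_single hC hti hm
  obtain ⟨hi', ht'⟩ := loop_single hC hti.symm hm'
  refine (Pi.basisFun ℤ I).ext fun l => ?_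
  rw [Pi.basisFun_apply, LinearMap.id_apply]
  by_cases hl : l ∈ ({t, i} : Set I)
  · rcases hl with rfl | rfl
    · exact ht
    · exact hi
  have h1 := walkMap_single_nonneg_of_notMem (a := a) hC hl _ (mem_alt t i (2 * m))
  have h2 := walkMap_single_nonneg_of_notMem (a := a) hC (by rwa [Set.pair_comm] at hl) _
    (mem_alt i t (2 * m))
  have hinv := loop_reverse hC hti hm (Pi.single l 1)
  have hsup : ∀ k ∉ ({t, i} : Set I),
      (C.walkMap a (alt t i (2 * m)) (Pi.single l 1) - Pi.single l 1 : I → ℤ) k = 0 := fun k hk => by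
    rw [Pi.sub_apply, walkMap_apply_of_notMem hk a _ (mem_alt t i (2 * m)), sub_self]
  have hd := eq_of_support hti hsup
  simp only [Set.mem_insert_iff, Set.mem_singleton_iff, not_or] at hl
  set d := C.walkMap a (alt t i (2 * m)) (Pi.single l 1) - Pi.single l 1 with hdd
  have he : C.walkMap a (alt t i (2 * m)) (Pi.single l 1) = Pi.single l 1 + d := by
    rw [hdd]; abel
  have hdfix : C.walkMap a (alt i t (2 * m)) d = d := by
    rw [hd, map_add, map_smul, map_smul, ht', hi']
  rw [he, map_add, hdfix] at hinv
  have key : ∀ k, k ≠ l → d k = 0 := by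
    intro k hk
    have h3 := congrFun hinv k
    have h4 := h2 k
    have h5 := h1 k
    rw [he] at h5
    simp only [Pi.add_apply, Pi.zero_apply, Pi.single_apply, hk, if_false, zero_add] at h3 h4 h5
    omega
  rw [he, hd, key t (Ne.symm hl.1), key i (Ne.symm hl.2)]
  simp

/-- The rank two braid relation. -/
theorem wEq_alt (hC : C.IsFRS) (hti : t ≠ i) (hm : m = (C.posIn a {t, i}).ncard) :
    C.WEq a (alt t i m) (alt i t m) := by
  refine ⟨walkEnd_alt_eq hC hti hm, LinearMap.ext fun v => ?_⟩
  have h1 : C.walkMap a (alt i t m) (C.walkMap a (alt t i (2 * m)) v) =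
      C.walkMap a (alt t i m) v := by
    rw [← alt_append_reverse, walkMap_append, walkEnd_alt_eq hC hti hm, walkMap_reverse']
  rw [← h1, loop_eq_id hC hti hm, LinearMap.id_apply]

end Loop

/-- Cancelling squares turns every word in two letters into an alternating one. -/
theorem exists_alt (a : A) (t i : I) (p : List I) (hp : ∀ j ∈ p, j ∈ ({t, i} : Set I)) :
    ∃ k ≤ p.length, C.WEq a p (alt t i k) ∨ C.WEq a p (alt i t k) := by
  have key : ∀ (a : A) (x y : I) (q : List I) (k n : ℕ), k ≤ n →
      C.WEq (C.ρ x a) q (alt x y k) → ∃ k' ≤ n + 1,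
        C.WEq a (x :: q) (alt x y k') ∨ C.WEq a (x :: q) (alt y x k') := by
    intro a x y q k n hk h
    cases k with
    | zero => exact ⟨1, by omega, Or.inl (h.cons x)⟩
    | succ k => exact ⟨k, by omega, Or.inr ((h.cons x).trans (WEq.cancel a x _))⟩
  have key' : ∀ (a : A) (x y : I) (q : List I) (k n : ℕ), k ≤ n →
      C.WEq (C.ρ x a) q (alt y x k) → ∃ k' ≤ n + 1,
        C.WEq a (x :: q) (alt x y k') ∨ C.WEq a (x :: q) (alt y x k') :=
    fun a x y q k n hk h => ⟨k + 1, by omega, Or.inl (h.cons x)⟩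
  induction p generalizing a with
  | nil => exact ⟨0, le_rfl, Or.inl (WEq.refl a [])⟩
  | cons s q ih =>
    obtain ⟨k, hk, h⟩ := ih (C.ρ s a) fun j hj => hp j (List.mem_cons_of_mem _ hj)
    rw [List.length_cons]
    rcases hp s List.mem_cons_self with rfl | rfl
    · rcases h with h | h
      · exact key a s i q k _ hk h
      · exact key' a s i q k _ hk h
    · simp_rw [or_comm (a := C.WEq a (s :: q) (alt t s _))]
      rcases h with h | h
      · exact key' a s t q k _ hk h
      · exact key a s t q k _ hk h

/-- The exchange property in rank two. -/
theorem exchange_rank_two (hC : C.IsFRS) (a : A) {t i : I} (hti : t ≠ i) (p : List I)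
    (hp : ∀ j ∈ p, j ∈ ({t, i} : Set I)) (hneg : ¬ 0 ≤ C.walkMap a p (Pi.single i 1)) :
    ∃ p', C.WEq a (i :: p') p ∧ p'.length < p.length := by
  have h0 : ¬ (0 : I → ℤ) ≤ C.walkMap a p (Pi.single i 1) → C.walkMap a p ≠ LinearMap.id := by
    intro h h'
    rw [h'] at h
    exact h (by simp)
  obtain ⟨k, hk, h | h⟩ := exists_alt (C := C) a t i p hp
  · by_cases hkm : k < (C.posIn a {t, i}).ncard
    · rw [h.2] at hneg
      exact absurd (walkMap_alt_single_nonneg hC a t i k hkm) hneg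
    · push Not at hkm
      have hm : 0 < (C.posIn a {t, i}).ncard :=
        (Set.ncard_pos (posIn_finite hC a _)).2 ⟨_, single_mem_posIn a (k := t) (by simp)⟩
      obtain ⟨n, hn⟩ := Nat.exists_eq_add_of_lt hm
      obtain ⟨d, rfl⟩ := Nat.exists_eq_add_of_le hkm
      obtain ⟨r, hr⟩ := alt_append t i (C.posIn a {t, i}).ncard d
      have hlen := congrArg List.length hr
      rw [List.length_append, alt_length, alt_length] at hlen
      refine ⟨alt t i n ++ r, ?_, ?_⟩
      · rw [hr] at h
        have h1 := (h.trans ((wEq_alt hC hti rfl).append_right r)).symm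
        have h2 : (C.posIn a {t, i}).ncard = n + 1 := by omega
        rw [h2] at h1
        exact h1
      · rw [List.length_append, alt_length]
        omega
  · cases k with
    | zero => exact absurd h.2 (h0 hneg)
    | succ k => exact ⟨alt t i k, h.symm, by rw [alt_length]; omega⟩

/-- The exchange property: if the inverse of the morphism given by `l` sends `α_i` to a negative
root, then splitting off a first letter `i` from the morphism leaves one with a word shorter than `l`. -/
theorem exchange (hC : C.IsFRS) (a : A) (l : List I) (i : I)
    (hneg : ¬ 0 ≤ C.walkMap a l (Pi.single i 1)) :
    ∃ l', C.WEq a (i :: l') l ∧ l'.length < l.length := by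
  induction hN : l.length using Nat.strong_induction_on generalizing a l i with
  | _ N ih =>
  subst hN
  cases l with
  | nil => exact absurd (show (0 : I → ℤ) ≤ Pi.single i 1 by simp) hneg
  | cons t l =>
  by_cases hti : t = i
  · subst hti
    exact ⟨l, WEq.refl _ _, by simp⟩
  -- Letters `t`, `i` are moved from the front of `q` to the end of `p`, without increasing the
  -- total length, until `q` keeps both simple roots positive.
  have main : ∀ n, ∀ p q : List I, (∀ j ∈ p, j ∈ ({t, i} : Set I)) → C.WEq a (p ++ q) (t :: l) →
      (p ++ q).length ≤ (t :: l).length → q.length < (t :: l).length → q.length = n →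
      ∃ l', C.WEq a (i :: l') (t :: l) ∧ l'.length < (t :: l).length := by
    intro n
    induction n using Nat.strong_induction_on with
    | _ n ihn =>
    intro p q hp hpq hlen hq hn
    by_cases hex : ∃ s ∈ ({t, i} : Set I), ¬ 0 ≤ C.walkMap (C.walkEnd a p) q (Pi.single s 1)
    · obtain ⟨s, hs, hsneg⟩ := hex
      obtain ⟨q', h1, h2⟩ := ih _ hq (C.walkEnd a p) q s hsneg rfl
      refine ihn q'.length (by omega) (p ++ [s]) q' ?_ ?_ ?_ (by omega) rfl
      · intro j hj
        rcases List.mem_append.1 hj with hj | hj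
        · exact hp j hj
        · rw [List.mem_singleton.1 hj]; exact hs
      · rw [List.append_assoc]
        exact (h1.append_left p).trans hpq
      · simp only [List.length_append, List.length_singleton] at hlen ⊢
        omega
    · push Not at hex
      have hpneg : ¬ 0 ≤ C.walkMap a p (Pi.single i 1) := by
        intro h0
        apply hneg
        rw [← hpq.2, walkMap_append]
        refine map_nonneg_of_support _ h0 (walkMap_support hp ?_) hex
        exact (single_mem_posIn (C := C) a (show i ∈ ({t, i} : Set I) by simp)).2.2
      obtain ⟨p', h1, h2⟩ := exchange_rank_two hC a hti p hp hpneg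
      refine ⟨p' ++ q, (h1.append_right q).trans hpq, ?_⟩
      simp only [List.length_append] at hlen ⊢
      omega
  exact main _ [t] l (by simp) (WEq.refl _ _) le_rfl (by simp) rfl

/-! ### Words of morphisms and the weak order -/

theorem wordTarget_eq (b : A) (l : List I) : C.wordTarget b l = C.walkEnd b l.reverse := by
  induction l with
  | nil => rfl
  | cons i l ih => rw [List.reverse_cons, walkEnd_append, ← ih]; rfl

theorem wordMap_eq (b : A) (l : List I) : C.wordMap b l = C.walkMap b l.reverse := by
  induction l with
  | nil => rfl
  | cons i l ih =>
    funext v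
    rw [List.reverse_cons, walkMap_snoc, ← ih, ← wordTarget_eq]; rfl

theorem Realizes.walkEnd_eq {w : Mor C} {l : List I} (h : Realizes w l) :
    C.walkEnd w.tgt l = w.src := by
  have := walkEnd_reverse (C := C) w.src l.reverse
  rwa [← wordTarget_eq w.src l, h.1, List.reverse_reverse] at this

theorem Realizes.wEq {w : Mor C} {l l' : List I} (h : Realizes w l) (h' : Realizes w l') :
    C.WEq w.tgt l l' := by
  have h1 : C.WEq w.src l.reverse l'.reverse := by
    refine ⟨?_, DFunLike.coe_injective ?_⟩
    · rw [← wordTarget_eq, ← wordTarget_eq, h.1, h'.1]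
    · rw [← wordMap_eq, ← wordMap_eq, h.2, h'.2]
  have h2 := h1.reverse
  rwa [← wordTarget_eq, h.1, List.reverse_reverse, List.reverse_reverse] at h2

theorem Realizes.of_wEq {w : Mor C} {l l' : List I} (h : Realizes w l)
    (h' : C.WEq w.tgt l' l) : Realizes w l' := by
  have h1 := h'.symm.reverse
  rw [h.walkEnd_eq] at h1
  refine ⟨?_, ?_⟩
  · rw [wordTarget_eq, ← h1.1, ← wordTarget_eq, h.1]
  · rw [wordMap_eq, ← h1.2, ← wordMap_eq, h.2]

theorem Realizes.ext {u w : Mor C} {l : List I} (hu : Realizes u l) (hw : Realizes w l)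
    (ht : u.tgt = w.tgt) : u = w := by
  have hs : u.src = w.src := by rw [← hu.walkEnd_eq, ← hw.walkEnd_eq, ht]
  refine Mor.ext hs ht ?_
  rw [← hu.2, ← hw.2, hs]

variable (C) in
/-- The morphism with target `a` given by the word `l`. -/
def wordMor (a : A) (l : List I) : Mor C where
  src := C.walkEnd a l
  tgt := a
  toFun := C.wordMap (C.walkEnd a l) l
  spec := ⟨l, by rw [wordTarget_eq, walkEnd_reverse], rfl⟩

theorem realizes_wordMor (a : A) (l : List I) : Realizes (wordMor C a l) l :=
  ⟨by rw [wordTarget_eq]; exact walkEnd_reverse a l, rfl⟩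

theorem realizes_sgen (a : A) (i : I) : Realizes (sgen C a i) [i] :=
  ⟨C.ρ_invol i a, Function.comp_id _⟩

theorem Realizes.comp {u v : Mor C} {p q : List I} (hu : Realizes u p) (hv : Realizes v q)
    (h : v.tgt = u.src) : Realizes (u.comp v) (p ++ q) := by
  rw [Mor.comp, dif_pos h]
  refine ⟨?_, ?_⟩
  · change C.wordTarget v.src (p ++ q) = u.tgt
    rw [C.wordTarget_append, hv.1, h, hu.1]
  · change C.wordMap v.src (p ++ q) = u.toFun ∘ v.toFun
    rw [C.wordMap_append, hv.1, h, hu.2, hv.2]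

theorem comp_tgt (u v : Mor C) : (u.comp v).tgt = u.tgt := by
  unfold Mor.comp
  split_ifs <;> rfl

theorem len_le {w : Mor C} {l : List I} (h : Realizes w l) : len w ≤ l.length :=
  Nat.sInf_le ⟨l, h, rfl⟩

theorem exists_isReduced (w : Mor C) : ∃ l, IsReduced w l := by
  obtain ⟨l, hl⟩ := w.spec
  exact Nat.sInf_mem (s := {k | ∃ l : List I, Realizes w l ∧ l.length = k}) ⟨_, l, hl, rfl⟩

theorem IsReduced.red {w : Mor C} {l : List I} (h : IsReduced w l) : C.Red w.tgt l :=
  fun _ hl => h.2.trans_le (len_le (h.1.of_wEq hl))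

theorem Realizes.isReduced {w : Mor C} {l : List I} (h : Realizes w l) (hl : C.Red w.tgt l) :
    IsReduced w l := by
  obtain ⟨l', h'⟩ := exists_isReduced w
  exact ⟨h, le_antisymm ((hl _ (h'.1.wEq h)).trans h'.2.le) (len_le h)⟩

/-- `u ≤_R w` means that some reduced word of `w` has a word of `u` as a prefix. -/
theorem weakLe_iff {u w : Mor C} : weakLe u w ↔
    u.tgt = w.tgt ∧ ∃ p q, Realizes u p ∧ Realizes w (p ++ q) ∧ C.Red w.tgt (p ++ q) := by
  constructor
  · rintro ⟨v, hv, rfl, hlen⟩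
    obtain ⟨p, hp⟩ := exists_isReduced u
    obtain ⟨q, hq⟩ := exists_isReduced v
    have h := hp.1.comp hq.1 hv
    refine ⟨(comp_tgt u v).symm, p, q, hp.1, h, IsReduced.red ⟨h, ?_⟩⟩
    rw [hlen, List.length_append, hp.2, hq.2]
  · rintro ⟨ht, p, q, hp, hpq, hred⟩
    have hq := realizes_wordMor (C := C) u.src q
    have hc := hp.comp hq rfl
    have hw : w = u.comp (wordMor C u.src q) :=
      Realizes.ext hpq hc (by rw [comp_tgt, ht])
    refine ⟨wordMor C u.src q, rfl, hw, ?_⟩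
    have h1 := (hpq.isReduced hred).2
    rw [List.length_append] at h1
    obtain ⟨p', hp'⟩ := exists_isReduced u
    obtain ⟨q', hq'⟩ := exists_isReduced (wordMor C u.src q)
    have h2 := len_le (hp'.1.comp hq'.1 rfl)
    rw [← hw, List.length_append, hp'.2, hq'.2] at h2
    have h3 := len_le hp
    have h4 := len_le hq
    omega

theorem weakLe_trans {u v w : Mor C} (h : weakLe u v) (h' : weakLe v w) : weakLe u w := by
  rw [weakLe_iff] at *
  obtain ⟨ht, p, q, hp, hpq, hred⟩ := h
  obtain ⟨ht', p', q', hp', hpq', hred'⟩ := h'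
  rw [← ht'] at hred'
  have h1 : C.WEq w.tgt (p ++ q ++ q') (p' ++ q') := by
    rw [← ht']; exact (hpq.wEq hp').append_right q'
  refine ⟨ht.trans ht', p, q ++ q', hp, ?_, ?_⟩
  · rw [← List.append_assoc]; exact hpq'.of_wEq h1
  · rw [← List.append_assoc]
    rw [ht'] at hred'
    refine hred'.of_wEq h1 ?_
    have h2 := hred _ (hp'.wEq hpq)
    simp only [List.length_append] at h2 ⊢
    omega

/-- The first letter of a reduced word is a left descent. -/
theorem not_nonneg_of_red_cons (hC : C.IsFRS) {a : A} {i : I} {l : List I}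
    (h : C.Red a (i :: l)) : ¬ 0 ≤ C.walkMap a (i :: l) (Pi.single i 1) := by
  intro h0
  rw [walkMap_cons, sigmaLin_single, map_neg] at h0
  obtain ⟨l', h1, h2⟩ := exchange hC (C.ρ i a) l i
    (not_nonneg_of_le_zero (walkMap_mem_roots l (single_mem_roots _ i)) (by simpa using h0))
  have h3 := h l' ((WEq.cancel a i l').symm.trans (h1.cons i))
  rw [List.length_cons] at h3
  omega

/-- Left descents are detected by the sign of `w⁻¹ α_i`. -/
theorem sgen_weakLe_iff (hC : C.IsFRS) {w : Mor C} {l : List I} (hl : Realizes w l) (i : I) :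
    weakLe (sgen C w.tgt i) w ↔ ¬ 0 ≤ C.walkMap w.tgt l (Pi.single i 1) := by
  constructor
  · intro h
    obtain ⟨-, p, q, hp, hpq, hred⟩ := weakLe_iff.1 h
    have h0 : C.WEq w.tgt ([i] ++ q) (p ++ q) :=
      WEq.append_right ((realizes_sgen w.tgt i).wEq hp) q
    have h1 : C.Red w.tgt (i :: q) := by
      refine hred.of_wEq h0 ?_
      have h3 : p ≠ [] := by
        rintro rfl
        have h4 := congrFun (hp.2.trans (realizes_sgen w.tgt i).2.symm) (Pi.single i 1)
        have h5 : C.wordMap (sgen C w.tgt i).src [i] (Pi.single i 1) = -Pi.single i 1 :=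
          sigmaLin_single _ _
        rw [h5] at h4
        have := congrFun h4 i
        simp [wordMap] at this
      have := List.length_pos_iff.2 h3
      simp only [List.length_append, List.length_cons]
      omega
    rw [(hl.wEq (hpq.of_wEq h0)).2]
    exact not_nonneg_of_red_cons hC h1
  · intro h
    obtain ⟨l₀, hl₀⟩ := exists_isReduced w
    rw [(hl.wEq hl₀.1).2] at h
    obtain ⟨l', h1, h2⟩ := exchange hC _ _ _ h
    exact weakLe_iff.2 ⟨rfl, [i], l', realizes_sgen _ _, hl₀.1.of_wEq h1,
      hl₀.red.of_wEq h1 h2⟩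

/-! ### Parabolic subgroupoids -/

/-- If some word of a morphism has all its letters in `K`, then so does each reduced word. -/
theorem Red.letters (hC : C.IsFRS) {K : Set I} {a : A} {l l₀ : List I} (h : C.Red a l)
    (hl : C.WEq a l l₀) (hK : ∀ i ∈ l₀, i ∈ K) : ∀ i ∈ l, i ∈ K := by
  induction l generalizing a l₀ with
  | nil => simp
  | cons s l ih =>
    have hs : s ∈ K := by
      by_contra hs
      apply not_nonneg_of_red_cons hC h
      rw [hl.2]
      exact walkMap_single_nonneg_of_notMem hC hs l₀ hK
    have h1 : C.WEq (C.ρ s a) l (s :: l₀) := by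
      have h2 : C.WEq (C.ρ s (C.ρ s a)) (s :: l) l₀ := by rwa [C.ρ_invol]
      exact (WEq.cancel _ s l).symm.trans (h2.cons s)
    intro i hi
    rcases List.mem_cons.1 hi with rfl | hi
    · exact hs
    · refine ih (Red.right (p := [s]) h) h1 ?_ i hi
      intro j hj
      rcases List.mem_cons.1 hj with rfl | hj
      · exact hs
      · exact hK j hj

/-- A reduced word can be split as an element of `W_K` followed by an element without left descents
in `K`. -/
theorem exists_parabolic_split (hC : C.IsFRS) (K : Set I) (a : A) (p q : List I)
    (hp : ∀ i ∈ p, i ∈ K) (h : C.Red a (p ++ q)) :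
    ∃ p' q', (∀ i ∈ p', i ∈ K) ∧ C.WEq a (p' ++ q') (p ++ q) ∧ C.Red a (p' ++ q') ∧
      ∀ k ∈ K, 0 ≤ C.walkMap (C.walkEnd a p') q' (Pi.single k 1) := by
  induction hn : q.length using Nat.strong_induction_on generalizing p q with
  | _ n ih =>
  by_cases hex : ∃ k ∈ K, ¬ 0 ≤ C.walkMap (C.walkEnd a p) q (Pi.single k 1)
  · obtain ⟨k, hk, hneg⟩ := hex
    obtain ⟨q', h1, h2⟩ := exchange hC _ _ _ hneg
    have h3 : C.WEq a (p ++ [k] ++ q') (p ++ q) := by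
      rw [List.append_assoc]; exact h1.append_left p
    have h4 : C.Red a (p ++ [k] ++ q') := by
      refine h.of_wEq h3 ?_
      simp only [List.length_append, List.length_singleton]
      omega
    obtain ⟨p'', q'', h5, h6, h7⟩ := ih _ (hn ▸ h2) (p ++ [k]) q'
      (by
        intro j hj
        rcases List.mem_append.1 hj with hj | hj
        · exact hp j hj
        · rw [List.mem_singleton.1 hj]; exact hk) h4 rfl
    exact ⟨p'', q'', h5, h6.trans h3, h7⟩
  · push Not at hex
    exact ⟨p, q, hp, WEq.refl _ _, h, hex⟩

/-- If an element of `W_K` has every `i ∈ K` as a left descent, then its words in `K` cannot be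
prolonged by a letter of `K` to a reduced word. -/
theorem not_red_snoc (hC : C.IsFRS) {K : Set I} {a : A} {p : List I} (hp : ∀ i ∈ p, i ∈ K)
    (hdesc : ∀ i ∈ K, ¬ 0 ≤ C.walkMap a p (Pi.single i 1)) {j : I} (hj : j ∈ K) :
    ¬ C.Red a (p ++ [j]) := by
  intro hred
  set v := C.walkMap (C.walkEnd a p) p.reverse (Pi.single j 1) with hv
  have hpv : C.walkMap a p v = Pi.single j 1 := walkMap_reverse' a p _
  have hsupp : ∀ k ∉ K, v k = 0 :=
    walkMap_support (fun i hi => hp i (by simpa using hi))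
      (single_mem_posIn (C := C) a hj).2.2
  by_cases h0 : 0 ≤ v
  · have h1 := map_nonpos_of_support (C.walkMap a p) h0 hsupp fun k hk =>
      le_zero_of_not_nonneg hC (walkMap_mem_roots p (single_mem_roots a k)) (hdesc k hk)
    rw [hpv] at h1
    have := h1 j
    simp at this
  · obtain ⟨r, h1, h2⟩ := exchange hC _ _ _ h0
    have h3 := h1.reverse
    rw [h1.1, walkEnd_reverse, List.reverse_reverse, List.reverse_cons] at h3
    have h4 : C.WEq a r.reverse (p ++ [j]) := by
      have h5 := h3.append_right [j]
      rw [List.append_assoc] at h5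
      refine WEq.trans ?_ h5
      simpa using (WEq.append_left r.reverse (a := a) (WEq.cancel _ j [])).symm
    have h6 := hred _ h4
    simp only [List.length_append, List.length_reverse, List.length_singleton] at h2 h6
    omega

theorem InParabolic.letters (hC : C.IsFRS) {K : Set I} {w : Mor C} (h : InParabolic K w)
    {l : List I} (hl : Realizes w l) (hred : C.Red w.tgt l) : ∀ i ∈ l, i ∈ K := by
  obtain ⟨l₀, h1, h2⟩ := h
  exact hred.letters hC (hl.wEq h2) h1

theorem InParabolic.of_weakLe (hC : C.IsFRS) {K : Set I} {u w : Mor C} (h : InParabolic K w)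
    (hu : weakLe u w) : InParabolic K u := by
  obtain ⟨-, p, q, hp, hpq, hred⟩ := weakLe_iff.1 hu
  exact ⟨p, fun i hi => h.letters hC hpq hred i (List.mem_append_left q hi), hp⟩

theorem InParabolic.inter (hC : C.IsFRS) {K K' : Set I} {w : Mor C} (h : InParabolic K w)
    (h' : InParabolic K' w) : InParabolic (K ∩ K') w := by
  obtain ⟨l, hl⟩ := exists_isReduced w
  exact ⟨l, fun i hi => ⟨h.letters hC hl.1 hl.red i hi, h'.letters hC hl.1 hl.red i hi⟩, hl.1⟩

theorem InParabolic.mono {K K' : Set I} (hK : K ⊆ K') {w : Mor C} (h : InParabolic K w) :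
    InParabolic K' w := by
  obtain ⟨l, h1, h2⟩ := h
  exact ⟨l, fun i hi => hK (h1 i hi), h2⟩

theorem inParabolic_sgen (a : A) {i : I} {K : Set I} (hi : i ∈ K) :
    InParabolic K (sgen C a i) :=
  ⟨[i], by simpa using hi, realizes_sgen a i⟩

theorem mem_of_sgen_weakLe (hC : C.IsFRS) {K : Set I} {w : Mor C} (h : InParabolic K w) {i : I}
    (hi : weakLe (sgen C w.tgt i) w) : i ∈ K := by
  obtain ⟨l, h1, h2⟩ := h
  rw [sgen_weakLe_iff hC h2] at hi
  by_contra hK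
  exact hi (walkMap_single_nonneg_of_notMem hC hK l h1)

/-- The longest element of `W_K` lies below every morphism with left descent set containing
`K`. -/
theorem longest_weakLe (hC : C.IsFRS) {a : A} {K : Set I} {m t : Mor C}
    (hm : IsLongestPar a K m) (ht : t.tgt = a) (h : ∀ i ∈ K, weakLe (sgen C a i) t) :
    weakLe m t := by
  subst ht
  obtain ⟨l, hl⟩ := exists_isReduced t
  obtain ⟨p, q, hp, hpq, hred, hq⟩ :=
    exists_parabolic_split hC K t.tgt [] l (by simp) (by simpa using hl.red)
  rw [List.nil_append] at hpq
  have htpq : Realizes t (p ++ q) := hl.1.of_wEq hpq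
  have hdesc : ∀ i ∈ K, ¬ 0 ≤ C.walkMap t.tgt p (Pi.single i 1) := by
    intro i hi h0
    have h1 := (sgen_weakLe_iff hC htpq i).1 (h i hi)
    rw [walkMap_append] at h1
    exact h1 (map_nonneg_of_support _ h0
      (walkMap_support hp (single_mem_posIn (C := C) t.tgt hi).2.2) hq)
  -- The `W_K`-part of `t` is below `m`, and it cannot be prolonged inside `W_K`.
  have hu := hm.2.2 (wordMor C t.tgt p) rfl ⟨p, hp, realizes_wordMor _ _⟩
  obtain ⟨-, p₁, q₁, h1, h2, h3⟩ := weakLe_iff.1 hu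
  have h4 := hm.2.1.letters hC h2 h3
  rw [hm.1] at h3
  have h5 : C.WEq t.tgt p₁ p := h1.wEq (realizes_wordMor t.tgt p)
  have hq₁ : q₁ = [] := by
    cases q₁ with
    | nil => rfl
    | cons j q₂ =>
      exfalso
      refine not_red_snoc hC (K := K) (p := p₁) (fun i hi => h4 i (by simp [hi]))
        (by rw [h5.2]; exact hdesc) (h4 j (by simp)) (Red.left (q := q₂) ?_)
      simpa using h3
  rw [hq₁, List.append_nil] at h2
  exact weakLe_iff.2 ⟨hm.1, p, q, h2.of_wEq (by rw [hm.1]; exact h5.symm), htpq, hred⟩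

end CartanScheme


/-- `w_J ∧ w_{J'} = w_{J∩J'}` and `w_J ∨ w_{J'} = w_{J∪J'}`; consequently
`J ↦ w_J` is a lattice embedding of `2^I` into `Hom(-,a)`, and for every `w` the join of the
simple reflections `σ_i`, `i ∈ I_L(w)` (more generally over any `J ⊆ I`), is `w_J`. -/
theorem longest_meet_join (C : CartanScheme I A) (hC : C.IsFRS) (a : A)
    (J J' : Set I) (mJ mJ' : Mor C)
    (hmJ : IsLongestPar a J mJ) (hmJ' : IsLongestPar a J' mJ') :
    (∀ m : Mor C, IsLongestPar a (J ∩ J') m → IsMeet a mJ mJ' m) ∧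
    (∀ m : Mor C, IsLongestPar a (J ∪ J') m → IsJoin a mJ mJ' m) ∧
    (∀ (K K' : Set I) (mK mK' : Mor C), IsLongestPar a K mK → IsLongestPar a K' mK' →
      mK = mK' → K = K') ∧
    (∀ (K : Set I) (mK : Mor C), IsLongestPar a K mK →
      (∀ i ∈ K, weakLe (sgen C a i) mK) ∧
      ∀ t : Mor C, t.tgt = a → (∀ i ∈ K, weakLe (sgen C a i) t) → weakLe mK t) := by
  have hgen : ∀ (K : Set I) (mK : Mor C), IsLongestPar a K mK → ∀ i ∈ K, weakLe (sgen C a i) mK :=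
    fun K mK h i hi => h.2.2 _ rfl (inParabolic_sgen a hi)
  have hsub : ∀ (K K' : Set I) (m : Mor C), IsLongestPar a K m → IsLongestPar a K' m →
      K ⊆ K' := by
    intro K K' m h h' i hi
    have h1 := hgen K m h i hi
    rw [← h'.1] at h1
    exact mem_of_sgen_weakLe hC h'.2.1 h1
  refine ⟨fun m hm => ⟨hm.1, ?_, ?_, ?_⟩, fun m hm => ⟨hm.1, ?_, ?_, ?_⟩, ?_, ?_⟩
  · exact hmJ.2.2 m hm.1 (hm.2.1.mono Set.inter_subset_left)
  · exact hmJ'.2.2 m hm.1 (hm.2.1.mono Set.inter_subset_right)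
  · intro t ht h h'
    exact hm.2.2 t ht ((hmJ.2.1.of_weakLe hC h).inter hC (hmJ'.2.1.of_weakLe hC h'))
  · exact hm.2.2 mJ hmJ.1 (hmJ.2.1.mono Set.subset_union_left)
  · exact hm.2.2 mJ' hmJ'.1 (hmJ'.2.1.mono Set.subset_union_right)
  · intro t ht h h'
    refine longest_weakLe hC hm ht ?_
    rintro i (hi | hi)
    · exact weakLe_trans (hgen J mJ hmJ i hi) h
    · exact weakLe_trans (hgen J' mJ' hmJ' i hi) h'
  · rintro K K' mK mK' h h' rfl
    exact (hsub K K' mK h h').antisymm (hsub K' K mK h' h)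
  · exact fun K mK h => ⟨hgen K mK h, fun t ht ht' => longest_weakLe hC h ht ht'⟩
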